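/- For every pair (u, v) of real-valued functions on Ω that are locally bounded relative to Ω and satisfy u(x) ≤ v(x) for all x ∈ Ω, both pairs F(I(S(v))) = (I(I(S(v))), S(I(S(v)))) and F(S(I(u))) = (I(S(I(u))), S(S(I(u)))) are Hausdorff continuous. -/

import Mathlib

open Set

/-- Points of `ℝⁿ`. -/
abbrev Pt (n : ℕ) := EuclideanSpace ℝ (Fin n)

/-- Lower Baire operator `I(D,Ω,f)(x) = sup_{δ>0} inf { f y : y ∈ B_δ(x) ∩ D }`,
where `B_δ(x) = { y ∈ Ω : ‖y - x‖ < δ }`. -/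
noncomputable def Ilow {n : ℕ} (D Om : Set (Pt n)) (f : Pt n → ℝ) (x : Pt n) : ℝ :=
  sSup {a : ℝ | ∃ δ : ℝ, 0 < δ ∧
    a = sInf (f '' {y | y ∈ Om ∧ ‖y - x‖ < δ ∧ y ∈ D})}

/-- Upper Baire operator `S(D,Ω,f)(x) = inf_{δ>0} sup { f y : y ∈ B_δ(x) ∩ D }`. -/
noncomputable def Shigh {n : ℕ} (D Om : Set (Pt n)) (f : Pt n → ℝ) (x : Pt n) : ℝ :=
  sInf {a : ℝ | ∃ δ : ℝ, 0 < δ ∧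
    a = sSup (f '' {y | y ∈ Om ∧ ‖y - x‖ < δ ∧ y ∈ D})}

/-- `f`, defined on `D ⊆ Ω`, is locally bounded relative to `Ω`. -/
def LocBddOn {n : ℕ} (Om D : Set (Pt n)) (f : Pt n → ℝ) : Prop :=
  ∀ x ∈ Om, ∃ δ : ℝ, 0 < δ ∧ ∃ M : ℝ,
    ∀ y, y ∈ Om → ‖y - x‖ < δ → y ∈ D → |f y| < M

/-- `(u, v)` encodes an interval-valued function `x ↦ [u x, v x]` on `Om`. -/
def IntervalPair {n : ℕ} (Om : Set (Pt n)) (u v : Pt n → ℝ) : Prop :=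
  LocBddOn Om Om u ∧ LocBddOn Om Om v ∧ ∀ x ∈ Om, u x ≤ v x

/-- The pair `(u, v)` is S-continuous on `Om`: `I(u) = u` and `S(v) = v`. -/
def SCont {n : ℕ} (Om : Set (Pt n)) (u v : Pt n → ℝ) : Prop :=
  ∀ x ∈ Om, Ilow Om Om u x = u x ∧ Shigh Om Om v x = v x

/-- The pair `(u, v)` is Hausdorff continuous on `Om`. -/
def HCont {n : ℕ} (Om : Set (Pt n)) (u v : Pt n → ℝ) : Prop :=
  ∀ p q : Pt n → ℝ, LocBddOn Om Om p → LocBddOn Om Om q →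
    (∀ x ∈ Om, u x ≤ p x ∧ p x ≤ q x ∧ q x ≤ v x) →
    ∀ x ∈ Om, Ilow Om Om p x = u x ∧ Shigh Om Om q x = v x

/-- `(u, v)` is an H-continuous interval pair on `Om`. -/
def HContPair {n : ℕ} (Om : Set (Pt n)) (u v : Pt n → ℝ) : Prop :=
  IntervalPair Om u v ∧ HCont Om u v

/-- Lower endpoint of the pointwise interval product. -/
noncomputable def imin {n : ℕ} (u₁ v₁ u₂ v₂ : Pt n → ℝ) (x : Pt n) : ℝ :=
  min (min (u₁ x * u₂ x) (u₁ x * v₂ x)) (min (v₁ x * u₂ x) (v₁ x * v₂ x))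

/-- Upper endpoint of the pointwise interval product. -/
noncomputable def imax {n : ℕ} (u₁ v₁ u₂ v₂ : Pt n → ℝ) (x : Pt n) : ℝ :=
  max (max (u₁ x * u₂ x) (u₁ x * v₂ x)) (max (v₁ x * u₂ x) (v₁ x * v₂ x))

/-- `(pl, pu)` is the H-continuous pair contained pointwise in the interval sum of
`(u₁, v₁)` and `(u₂, v₂)`, i.e. `(pl, pu) = (u₁,v₁) ⊕ (u₂,v₂)`. -/
def IsOplus {n : ℕ} (Om : Set (Pt n)) (u₁ v₁ u₂ v₂ pl pu : Pt n → ℝ) : Prop :=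
  HContPair Om pl pu ∧
    ∀ x ∈ Om, u₁ x + u₂ x ≤ pl x ∧ pl x ≤ pu x ∧ pu x ≤ v₁ x + v₂ x

/-- `(ql, qu)` is the H-continuous pair contained pointwise in the interval product of
`(u₁, v₁)` and `(u₂, v₂)`, i.e. `(ql, qu) = (u₁,v₁) ⊗ (u₂,v₂)`. -/
def IsOtimes {n : ℕ} (Om : Set (Pt n)) (u₁ v₁ u₂ v₂ ql qu : Pt n → ℝ) : Prop :=
  HContPair Om ql qu ∧
    ∀ x ∈ Om, imin u₁ v₁ u₂ v₂ x ≤ ql x ∧ ql x ≤ qu x ∧ qu x ≤ imax u₁ v₁ u₂ v₂ x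

def BLow {n : ℕ} (Om : Set (Pt n)) (f : Pt n → ℝ) : Prop :=
  ∀ R : ℝ, ∃ M : ℝ, ∀ y ∈ Om, ‖y‖ < R → M ≤ f y

def BUp {n : ℕ} (Om : Set (Pt n)) (f : Pt n → ℝ) : Prop :=
  ∀ R : ℝ, ∃ M : ℝ, ∀ y ∈ Om, ‖y‖ < R → f y ≤ M

theorem shigh_eq {n : ℕ} (Om : Set (Pt n)) (f : Pt n → ℝ) (x : Pt n) :
    Shigh Om Om f x = - Ilow Om Om (fun y => - f y) x := by
  unfold Shigh Ilow
  rw [Real.sInf_def]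
  congr 2
  ext a
  simp only [Set.mem_neg, Set.mem_setOf_eq]
  refine exists_congr fun δ => and_congr_right fun _ => ?_
  rw [Real.sInf_def]
  have : -((fun y => - f y) '' {y | y ∈ Om ∧ ‖y - x‖ < δ ∧ y ∈ Om})
      = f '' {y | y ∈ Om ∧ ‖y - x‖ < δ ∧ y ∈ Om} := by
    ext b
    simp
  rw [this]
  constructor <;> intro h <;> linarith

theorem ilow_congr {n : ℕ} {Om : Set (Pt n)} {f g : Pt n → ℝ} (h : ∀ x ∈ Om, f x = g x)
    (x : Pt n) : Ilow Om Om f x = Ilow Om Om g x := by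
  unfold Ilow
  have : ∀ δ : ℝ, f '' {y | y ∈ Om ∧ ‖y - x‖ < δ ∧ y ∈ Om}
      = g '' {y | y ∈ Om ∧ ‖y - x‖ < δ ∧ y ∈ Om} := fun δ =>
    Set.image_congr fun y hy => h y hy.1
  simp only [this]

theorem ilow_neg {n : ℕ} (Om : Set (Pt n)) (f : Pt n → ℝ) (x : Pt n) :
    Ilow Om Om (fun y => - f y) x = - Shigh Om Om f x := by
  rw [shigh_eq, neg_neg]

theorem shigh_neg {n : ℕ} (Om : Set (Pt n)) (f : Pt n → ℝ) (x : Pt n) :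
    Shigh Om Om (fun y => - f y) x = - Ilow Om Om f x := by
  rw [shigh_eq]; simp

theorem BLow.bdd {n : ℕ} {Om : Set (Pt n)} {f : Pt n → ℝ} (hf : BLow Om f) (x : Pt n) (δ : ℝ) :
    BddBelow (f '' {y | y ∈ Om ∧ ‖y - x‖ < δ ∧ y ∈ Om}) := by
  obtain ⟨M, hM⟩ := hf (‖x‖ + δ)
  refine ⟨M, ?_⟩
  rintro _ ⟨y, ⟨hy, hd, _⟩, rfl⟩
  apply hM y hy
  have := norm_sub_norm_le y x
  linarith

theorem inf_le {n : ℕ} {Om : Set (Pt n)} {f : Pt n → ℝ} (x : Pt n) (hx : x ∈ Om) {δ : ℝ}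
    (hδ : 0 < δ) :
    sInf (f '' {y | y ∈ Om ∧ ‖y - x‖ < δ ∧ y ∈ Om}) ≤ max (f x) 0 := by
  by_cases h : BddBelow (f '' {y | y ∈ Om ∧ ‖y - x‖ < δ ∧ y ∈ Om})
  · exact le_max_of_le_left (csInf_le h ⟨x, ⟨hx, by simpa using hδ, hx⟩, rfl⟩)
  · rw [Real.sInf_of_not_bddBelow h]; exact le_max_right _ _

/-- no boundedness needed -/
theorem i1 {n : ℕ} {Om : Set (Pt n)} {f : Pt n → ℝ} {x : Pt n} (hx : x ∈ Om) {δ c : ℝ}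
    (hδ : 0 < δ) (h : ∀ y ∈ Om, ‖y - x‖ < δ → c ≤ f y) : c ≤ Ilow Om Om f x := by
  unfold Ilow
  refine le_csSup_of_le ⟨max (f x) 0, ?_⟩ ⟨δ, hδ, rfl⟩ ?_
  rotate_left
  · refine le_csInf (Set.Nonempty.image _ ⟨x, hx, by simpa using hδ, hx⟩) ?_
    rintro _ ⟨y, ⟨hy, hd, _⟩, rfl⟩
    exact h y hy hd
  · rintro _ ⟨δ', h', rfl⟩
    exact inf_le x hx h'

theorem i2 {n : ℕ} {Om : Set (Pt n)} {f : Pt n → ℝ} (hf : BLow Om f) {x : Pt n}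
    {c : ℝ} (h : c < Ilow Om Om f x) : ∃ δ : ℝ, 0 < δ ∧ ∀ y ∈ Om, ‖y - x‖ < δ → c ≤ f y := by
  unfold Ilow at h
  obtain ⟨_, ⟨δ, hδ, rfl⟩, h⟩ := exists_lt_of_lt_csSup (by exact ⟨_, 1, one_pos, rfl⟩) h
  exact ⟨δ, hδ, fun y hy hd => h.le.trans (csInf_le (hf.bdd x δ) ⟨y, ⟨hy, hd, hy⟩, rfl⟩)⟩

theorem i3 {n : ℕ} {Om : Set (Pt n)} {f : Pt n → ℝ} (hf : BLow Om f) {x : Pt n} (hx : x ∈ Om) :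
    Ilow Om Om f x ≤ f x := by
  refine le_of_forall_lt_imp_le_of_dense fun c hc => ?_
  obtain ⟨δ, hδ, h⟩ := i2 hf hc
  exact h x hx (by simpa using hδ)

/-- lower semicontinuity -/
theorem i4 {n : ℕ} {Om : Set (Pt n)} {f : Pt n → ℝ} (hf : BLow Om f) {x : Pt n}
    {c : ℝ} (h : c < Ilow Om Om f x) :
    ∃ δ : ℝ, 0 < δ ∧ ∀ y ∈ Om, ‖y - x‖ < δ → c ≤ Ilow Om Om f y := by
  obtain ⟨δ, hδ, h⟩ := i2 hf h
  refine ⟨δ, hδ, fun y hy hd => i1 hy (sub_pos.2 hd) fun z hz hzd => h z hz ?_⟩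
  have := norm_sub_le_norm_sub_add_norm_sub z y x
  linarith

theorem i5 {n : ℕ} {Om : Set (Pt n)} {f : Pt n → ℝ} (hf : BLow Om f) :
    BLow Om (Ilow Om Om f) := by
  intro R
  obtain ⟨M, hM⟩ := hf (R + 1)
  refine ⟨M, fun y hy hR => i1 hy one_pos fun z hz hd => hM z hz ?_⟩
  have := norm_sub_norm_le z y
  linarith

theorem BUp.neg {n : ℕ} {Om : Set (Pt n)} {f : Pt n → ℝ} (hf : BUp Om f) :
    BLow Om (fun y => - f y) := fun R => by
  obtain ⟨M, hM⟩ := hf R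
  exact ⟨-M, fun y hy h => neg_le_neg (hM y hy h)⟩

theorem s1 {n : ℕ} {Om : Set (Pt n)} {f : Pt n → ℝ} {x : Pt n} (hx : x ∈ Om) {δ c : ℝ}
    (hδ : 0 < δ) (h : ∀ y ∈ Om, ‖y - x‖ < δ → f y ≤ c) : Shigh Om Om f x ≤ c := by
  rw [shigh_eq]
  have := i1 (f := fun y => - f y) hx hδ (c := -c) fun y hy hd => neg_le_neg (h y hy hd)
  linarith

theorem s2 {n : ℕ} {Om : Set (Pt n)} {f : Pt n → ℝ} (hf : BUp Om f) {x : Pt n}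
    {c : ℝ} (h : Shigh Om Om f x < c) : ∃ δ : ℝ, 0 < δ ∧ ∀ y ∈ Om, ‖y - x‖ < δ → f y ≤ c := by
  rw [shigh_eq] at h
  obtain ⟨δ, hδ, h⟩ := i2 hf.neg (neg_lt.1 h)
  exact ⟨δ, hδ, fun y hy hd => neg_le_neg_iff.1 (h y hy hd)⟩

theorem s3 {n : ℕ} {Om : Set (Pt n)} {f : Pt n → ℝ} (hf : BUp Om f) {x : Pt n} (hx : x ∈ Om) :
    f x ≤ Shigh Om Om f x := by
  rw [shigh_eq]
  have := i3 hf.neg hx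
  linarith

theorem s4 {n : ℕ} {Om : Set (Pt n)} {f : Pt n → ℝ} (hf : BUp Om f) {x : Pt n}
    {c : ℝ} (h : Shigh Om Om f x < c) :
    ∃ δ : ℝ, 0 < δ ∧ ∀ y ∈ Om, ‖y - x‖ < δ → Shigh Om Om f y ≤ c := by
  rw [shigh_eq] at h
  obtain ⟨δ, hδ, h⟩ := i4 hf.neg (neg_lt.1 h)
  refine ⟨δ, hδ, fun y hy hd => ?_⟩
  rw [shigh_eq]
  have := h y hy hd
  linarith

theorem s5 {n : ℕ} {Om : Set (Pt n)} {f : Pt n → ℝ} (hf : BUp Om f) :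
    BUp Om (Shigh Om Om f) := fun R => by
  obtain ⟨M, hM⟩ := i5 hf.neg R
  refine ⟨-M, fun y hy h => ?_⟩
  rw [shigh_eq]
  exact neg_le_neg (hM y hy h)

theorem red {n : ℕ} {Om : Set (Pt n)} {v : Pt n → ℝ} (hv : ¬ BLow Om v) {x : Pt n} (hx : x ∈ Om) :
    Ilow Om Om v x = Ilow Om Om (fun y => max (v y) 0) x := by
  have hw : BLow Om (fun y => max (v y) 0) := fun R => ⟨0, fun y _ _ => le_max_right _ _⟩
  have h0 : 0 ≤ Ilow Om Om v x := by
    unfold BLow at hv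
    push Not at hv
    obtain ⟨R, hR⟩ := hv
    refine le_csSup ⟨max (v x) 0, ?_⟩ ⟨|R| + ‖x‖ + 1, by positivity, ?_⟩
    · rintro _ ⟨δ', h', rfl⟩
      exact inf_le x hx h'
    · rw [Real.sInf_of_not_bddBelow]
      rintro ⟨M, hM⟩
      obtain ⟨y, hy, hyR, hlt⟩ := hR M
      have := hM ⟨y, ⟨hy, ?_, hy⟩, rfl⟩
      · linarith
      · have := norm_sub_le y x
        have := le_abs_self R
        linarith
  apply le_antisymm
  · refine csSup_le ⟨_, 1, one_pos, rfl⟩ ?_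
    rintro _ ⟨δ, hδ, rfl⟩
    refine i1 hx hδ fun y hy hd => ?_
    by_cases h : BddBelow (v '' {y | y ∈ Om ∧ ‖y - x‖ < δ ∧ y ∈ Om})
    · exact le_max_of_le_left (csInf_le h ⟨y, ⟨hy, hd, hy⟩, rfl⟩)
    · rw [Real.sInf_of_not_bddBelow h]; exact le_max_right _ _
  · refine le_of_forall_lt_imp_le_of_dense fun c hc => ?_
    rcases le_or_gt c 0 with h | h
    · exact h.trans h0
    · obtain ⟨δ, hδ, h'⟩ := i2 hw hc
      refine i1 hx hδ fun y hy hd => ?_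
      rcases le_max_iff.1 (h' y hy hd) with h1 | h1
      · exact h1
      · linarith

theorem red_s {n : ℕ} {Om : Set (Pt n)} (v : Pt n → ℝ) :
    ∃ w, BUp Om w ∧ ∀ x ∈ Om, Shigh Om Om v x = Shigh Om Om w x := by
  by_cases hv : BLow Om (fun y => - v y)
  · refine ⟨v, fun R => ?_, fun _ _ => rfl⟩
    obtain ⟨M, hM⟩ := hv R
    exact ⟨-M, fun y hy h => by have := hM y hy h; linarith⟩
  · refine ⟨fun y => - max (- v y) 0, fun R => ⟨0, fun y _ _ => ?_⟩, fun x hx => ?_⟩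
    · have := le_max_right (- v y) 0
      linarith
    · rw [shigh_neg, shigh_eq, red hv hx]

theorem locb {n : ℕ} {Om : Set (Pt n)} {f : Pt n → ℝ} (h1 : BLow Om f) (h2 : BUp Om f) :
    LocBddOn Om Om f := by
  intro x hx
  obtain ⟨M, hM⟩ := h1 (‖x‖ + 1)
  obtain ⟨N, hN⟩ := h2 (‖x‖ + 1)
  refine ⟨1, one_pos, |M| + |N| + 1, fun y hy hd _ => ?_⟩
  have := norm_sub_norm_le y x
  have a := hM y hy (by linarith)
  have b := hN y hy (by linarith)
  have := neg_abs_le M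
  have := le_abs_self N
  have := abs_nonneg M
  have := abs_nonneg N
  rw [abs_lt]
  constructor <;> linarith

theorem core {n : ℕ} (Om : Set (Pt n)) (f g : Pt n → ℝ) (hg1 : BLow Om g) (hg2 : BUp Om g)
    (usc : ∀ x ∈ Om, ∀ c, g x < c → ∃ δ : ℝ, 0 < δ ∧ ∀ y ∈ Om, ‖y - x‖ < δ → g y ≤ c)
    (hfg : ∀ x ∈ Om, f x = Ilow Om Om g x) :
    HContPair Om (Ilow Om Om f) (Shigh Om Om f) := by
  have hle : ∀ x ∈ Om, f x ≤ g x := fun x hx => (hfg x hx).trans_le (i3 hg1 hx)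
  have f1 : BLow Om f := fun R => by
    obtain ⟨M, hM⟩ := i5 hg1 R
    exact ⟨M, fun y hy h => (hM y hy h).trans_eq (hfg y hy).symm⟩
  have f2 : BUp Om f := fun R => by
    obtain ⟨M, hM⟩ := hg2 R
    exact ⟨M, fun y hy h => (hle y hy).trans (hM y hy h)⟩
  have lsc : ∀ x ∈ Om, ∀ c, c < f x → ∃ δ : ℝ, 0 < δ ∧ ∀ y ∈ Om, ‖y - x‖ < δ → c ≤ f y := by
    intro x hx c hc
    rw [hfg x hx] at hc
    obtain ⟨δ, hδ, h⟩ := i4 hg1 hc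
    exact ⟨δ, hδ, fun y hy hd => (h y hy hd).trans_eq (hfg y hy).symm⟩
  have hI : ∀ x ∈ Om, Ilow Om Om f x = f x := fun x hx =>
    le_antisymm (i3 f1 hx) <| le_of_forall_lt_imp_le_of_dense fun c hc => by
      obtain ⟨δ, hδ, h⟩ := lsc x hx c hc
      exact i1 hx hδ h
  have hS : ∀ x ∈ Om, Shigh Om Om f x ≤ g x := fun x hx =>
    le_of_forall_gt_imp_ge_of_dense fun c hc => by
      obtain ⟨δ, hδ, h⟩ := usc x hx c hc
      exact s1 hx hδ fun y hy hd => (hle y hy).trans (h y hy hd)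
  have bl : ∀ p : Pt n → ℝ, (∀ x ∈ Om, f x ≤ p x) → BLow Om p := fun p hp R => by
    obtain ⟨M, hM⟩ := f1 R
    exact ⟨M, fun y hy h => (hM y hy h).trans (hp y hy)⟩
  have bu : ∀ p : Pt n → ℝ, (∀ x ∈ Om, p x ≤ g x) → BUp Om p := fun p hp R => by
    obtain ⟨M, hM⟩ := hg2 R
    exact ⟨M, fun y hy h => (hp y hy).trans (hM y hy h)⟩
  refine ⟨⟨locb (i5 f1) (bu _ fun x hx => (hI x hx).trans_le (hle x hx)),
    locb (bl _ fun x hx => s3 f2 hx) (s5 f2), fun x hx => (i3 f1 hx).trans (s3 f2 hx)⟩, ?_⟩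
  intro p q _ _ hpq x hx
  have hp : ∀ y ∈ Om, f y ≤ p y := fun y hy => (hI y hy).symm.trans_le (hpq y hy).1
  have hpg : ∀ y ∈ Om, p y ≤ g y := fun y hy =>
    ((hpq y hy).2.1.trans (hpq y hy).2.2).trans (hS y hy)
  have hq : ∀ y ∈ Om, f y ≤ q y := fun y hy => (hp y hy).trans (hpq y hy).2.1
  have hqg : ∀ y ∈ Om, q y ≤ g y := fun y hy => (hpq y hy).2.2.trans (hS y hy)
  constructor
  · rw [hI x hx]
    apply le_antisymm
    · refine le_of_forall_lt_imp_le_of_dense fun c hc => ?_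
      obtain ⟨δ, hδ, h⟩ := i2 (bl p hp) hc
      rw [hfg x hx]
      exact i1 hx hδ fun y hy hd => (h y hy hd).trans (hpg y hy)
    · refine le_of_forall_lt_imp_le_of_dense fun c hc => ?_
      obtain ⟨δ, hδ, h⟩ := lsc x hx c hc
      exact i1 hx hδ fun y hy hd => (h y hy hd).trans (hp y hy)
  · apply le_antisymm
    · refine le_of_forall_gt_imp_ge_of_dense fun c hc => ?_
      obtain ⟨δ, hδ, h⟩ := s4 f2 hc
      exact s1 hx hδ fun y hy hd => (hpq y hy).2.2.trans (h y hy hd)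
    · refine le_of_forall_gt_imp_ge_of_dense fun c hc => ?_
      obtain ⟨δ, hδ, h⟩ := s2 (bu q hqg) hc
      exact s1 hx hδ fun y hy hd => (hq y hy).trans (h y hy hd)

theorem first {n : ℕ} (Om : Set (Pt n)) (v : Pt n → ℝ) :
    HContPair Om (Ilow Om Om (Ilow Om Om (Shigh Om Om v)))
      (Shigh Om Om (Ilow Om Om (Shigh Om Om v))) := by
  obtain ⟨w, hw, hvw⟩ := red_s (Om := Om) v
  have usc : ∀ x ∈ Om, ∀ c, Shigh Om Om v x < c →
      ∃ δ : ℝ, 0 < δ ∧ ∀ y ∈ Om, ‖y - x‖ < δ → Shigh Om Om v y ≤ c := by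
    intro x hx c hc
    rw [hvw x hx] at hc
    obtain ⟨δ, hδ, h⟩ := s4 hw hc
    exact ⟨δ, hδ, fun y hy hd => (hvw y hy).trans_le (h y hy hd)⟩
  have hu : BUp Om (Shigh Om Om v) := fun R => by
    obtain ⟨M, hM⟩ := s5 hw R
    exact ⟨M, fun y hy h => (hvw y hy).trans_le (hM y hy h)⟩
  by_cases hl : BLow Om (Shigh Om Om v)
  · exact core Om _ _ hl hu usc fun _ _ => rfl
  · refine core Om _ (fun y => max (Shigh Om Om v y) 0) (fun R => ⟨0, fun y _ _ => le_max_right _ _⟩)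
      (fun R => ?_) (fun x hx c hc => ?_) fun x hx => red hl hx
    · obtain ⟨M, hM⟩ := hu R
      exact ⟨max M 0, fun y hy h => max_le_max_right 0 (hM y hy h)⟩
    · obtain ⟨h1, h2⟩ := max_lt_iff.1 hc
      obtain ⟨δ, hδ, h⟩ := usc x hx c h1
      exact ⟨δ, hδ, fun y hy hd => max_le (h y hy hd) h2.le⟩

theorem LocBddOn.neg' {n : ℕ} {Om : Set (Pt n)} {f : Pt n → ℝ} (h : LocBddOn Om Om f) :
    LocBddOn Om Om (fun y => - f y) := by
  simpa [LocBddOn] using h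

theorem dual {n : ℕ} {Om : Set (Pt n)} {a b : Pt n → ℝ} (h : HContPair Om a b) :
    HContPair Om (fun y => - b y) (fun y => - a y) := by
  obtain ⟨⟨h1, h2, h3⟩, h4⟩ := h
  refine ⟨⟨h2.neg', h1.neg', fun x hx => neg_le_neg (h3 x hx)⟩, ?_⟩
  intro p q hp hq hpq x hx
  have := h4 (fun y => - q y) (fun y => - p y) hq.neg' hp.neg' (fun y hy => by
    obtain ⟨a1, a2, a3⟩ := hpq y hy
    exact ⟨by linarith, by linarith, by linarith⟩) x hx
  rw [ilow_neg, shigh_neg] at this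
  exact ⟨by linarith [this.2], by linarith [this.1]⟩

theorem stmt0 {n : ℕ} (Om : Set (Pt n)) (u v : Pt n → ℝ)
    (hu : LocBddOn Om Om u) (hv : LocBddOn Om Om v)
    (huv : ∀ x ∈ Om, u x ≤ v x) :
    HContPair Om (Ilow Om Om (Ilow Om Om (Shigh Om Om v)))
      (Shigh Om Om (Ilow Om Om (Shigh Om Om v))) ∧
    HContPair Om (Ilow Om Om (Shigh Om Om (Ilow Om Om u)))
      (Shigh Om Om (Shigh Om Om (Ilow Om Om u))) := by
  refine ⟨first Om v, ?_⟩
  have h := dual (first Om (fun y => - u y))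
  have e1 : Shigh Om Om (fun y => - u y) = fun y => - Ilow Om Om u y :=
    funext fun x => shigh_neg Om u x
  have e2 : Ilow Om Om (fun y => - Ilow Om Om u y) = fun y => - Shigh Om Om (Ilow Om Om u) y :=
    funext fun x => ilow_neg Om _ x
  have e3 : Ilow Om Om (fun y => - Shigh Om Om (Ilow Om Om u) y)
      = fun y => - Shigh Om Om (Shigh Om Om (Ilow Om Om u)) y :=
    funext fun x => ilow_neg Om _ x
  have e4 : Shigh Om Om (fun y => - Shigh Om Om (Ilow Om Om u) y)
      = fun y => - Ilow Om Om (Shigh Om Om (Ilow Om Om u)) y :=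
    funext fun x => shigh_neg Om _ x
  rw [e1, e2, e3, e4] at h
  simpa only [neg_neg] using h
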